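/- Over a field of characteristic 0, if f, g are nonzero binary forms of coprime degrees m and n with {f,g} = 0, then there is a linear form ℓ (degree gcd(m,n) = 1) with f = c₁·ℓ^m and g = c₂·ℓ^n for nonzero scalars c₁, c₂. -/

import Mathlib

open MvPolynomial

/-- The first transvectant of two binary forms. -/
noncomputable def transvectant {k : Type*} [CommRing k]
    (f g : MvPolynomial (Fin 2) k) : MvPolynomial (Fin 2) k :=
  pderiv 0 f * pderiv 1 g - pderiv 1 f * pderiv 0 g

namespace TransvAux

lemma deriv_aeval {K : Type*} [Field K] (f : MvPolynomial (Fin 2) K) :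
    Polynomial.derivative (aeval ![(Polynomial.X : Polynomial K), 1] f) =
      aeval ![(Polynomial.X : Polynomial K), 1] (pderiv 0 f) := by
  induction f using MvPolynomial.induction_on with
  | C a => simp [← Polynomial.C_eq_algebraMap]
  | add p q hp hq => simp [hp, hq]
  | mul_X p i hp =>
    rw [map_mul, Polynomial.derivative_mul, hp, pderiv_mul]
    fin_cases i <;> simp [pderiv_X]

lemma mult_eq {K : Type*} [Field K] [CharZero K] (m n : ℕ) (p q : Polynomial K)
    (hp : p ≠ 0) (hq : q ≠ 0)
    (h : (n : Polynomial K) * q * p.derivative = (m : Polynomial K) * p * q.derivative) (a : K) :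
    n * p.rootMultiplicity a = m * q.rootMultiplicity a := by
  obtain ⟨P, hP, hPa⟩ := Polynomial.exists_eq_pow_rootMultiplicity_mul_and_not_dvd p hp a
  obtain ⟨Q, hQ, hQa⟩ := Polynomial.exists_eq_pow_rootMultiplicity_mul_and_not_dvd q hq a
  generalize p.rootMultiplicity a = r at *
  generalize q.rootMultiplicity a = s at *
  rw [Polynomial.dvd_iff_isRoot, Polynomial.IsRoot.def] at hPa hQa
  set L : Polynomial K := Polynomial.X - Polynomial.C a with hL
  have hL0 : L ≠ 0 := Polynomial.X_sub_C_ne_zero a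
  have key : ∀ (r : ℕ) (P : Polynomial K), L * (L ^ r * P).derivative =
      L ^ r * ((r : Polynomial K) * P + L * P.derivative) := by
    intro r P
    have hd : L.derivative = 1 := by simp [hL]
    rw [Polynomial.derivative_mul, Polynomial.derivative_pow, hd]
    rcases r with _ | r
    · simp
    · simp only [Nat.add_sub_cancel, pow_succ, Polynomial.C_eq_natCast]; ring
  have e1 := key r P
  have e2 := key s Q
  rw [← hP] at e1
  rw [← hQ] at e2
  have h2 : L ^ (r + s) * ((n : Polynomial K) * Q * ((r : Polynomial K) * P + L * P.derivative)) =
      L ^ (r + s) * ((m : Polynomial K) * P * ((s : Polynomial K) * Q + L * Q.derivative)) := by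
    calc _ = (n : Polynomial K) * (L ^ s * Q) *
          (L ^ r * ((r : Polynomial K) * P + L * P.derivative)) := by ring
      _ = L * ((n : Polynomial K) * q * p.derivative) := by rw [← e1, ← hQ]; ring
      _ = (m : Polynomial K) * (L ^ r * P) *
          (L ^ s * ((s : Polynomial K) * Q + L * Q.derivative)) := by
            rw [h, ← e2, ← hP]; ring
      _ = _ := by ring
  have h3 := mul_left_cancel₀ (pow_ne_zero _ hL0) h2
  have h4 := congrArg (Polynomial.eval a) h3
  have hLa : L.eval a = 0 := by simp [hL]
  simp only [Polynomial.eval_mul, Polynomial.eval_add, Polynomial.eval_natCast, hLa,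
    zero_mul, add_zero] at h4
  have h5 : ((n * r : ℕ) : K) = ((m * s : ℕ) : K) := by
    apply mul_right_cancel₀ (mul_ne_zero hPa hQa)
    push_cast
    linear_combination h4
  exact_mod_cast h5

lemma eq_of_mult {K : Type*} [Field K] (m : ℕ) (p : Polynomial K) (hp : p ≠ 0)
    (hd : p.natDegree ≤ m) (a : K) (h : m ≤ p.rootMultiplicity a) :
    ∃ c : K, c ≠ 0 ∧ p = Polynomial.C c * (Polynomial.X - Polynomial.C a) ^ m := by
  obtain ⟨s, hs⟩ := (Polynomial.le_rootMultiplicity_iff hp).1 h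
  have hs0 : s ≠ 0 := by rintro rfl; simp at hs; exact hp hs
  have hdeg : p.natDegree = m + s.natDegree := by
    rw [hs, Polynomial.natDegree_mul (pow_ne_zero _ (Polynomial.X_sub_C_ne_zero a)) hs0]
    simp
  obtain ⟨c, rfl⟩ := Polynomial.natDegree_eq_zero.1 (by omega : s.natDegree = 0)
  exact ⟨c, by simpa using hs0, by rw [hs, mul_comm]⟩

lemma const_of_no_root {K : Type*} [Field K] [IsAlgClosed K] (p : Polynomial K) (hp : p ≠ 0)
    (h : ∀ a, ¬ p.IsRoot a) : ∃ c : K, c ≠ 0 ∧ p = Polynomial.C c := by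
  by_cases hd : p.degree = 0
  · have := Polynomial.eq_C_of_degree_eq_zero hd
    refine ⟨p.coeff 0, fun h0 => hp ?_, this⟩
    rw [this, h0]; simp
  · obtain ⟨a, ha⟩ := IsAlgClosed.exists_root p hd
    exact absurd ha (h a)

lemma uni {K : Type*} [Field K] [IsAlgClosed K] [CharZero K] (m n : ℕ) (hmn : Nat.Coprime m n)
    (hm : m ≠ 0) (hn : n ≠ 0) (p q : Polynomial K) (hp : p ≠ 0) (hq : q ≠ 0)
    (hpd : p.natDegree ≤ m) (hqd : q.natDegree ≤ n)
    (h : (n : Polynomial K) * q * p.derivative = (m : Polynomial K) * p * q.derivative) :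
    ∃ (l : Polynomial K) (c₁ c₂ : K), l.natDegree ≤ 1 ∧ c₁ ≠ 0 ∧ c₂ ≠ 0 ∧
      p = Polynomial.C c₁ * l ^ m ∧ q = Polynomial.C c₂ * l ^ n := by
  have hmul := mult_eq m n p q hp hq h
  by_cases hr : ∃ a, p.IsRoot a
  · obtain ⟨a, ha⟩ := hr
    have hpos := (Polynomial.rootMultiplicity_pos hp).2 ha
    have e := hmul a
    have hqpos : 0 < q.rootMultiplicity a := by
      rcases Nat.eq_zero_or_pos (q.rootMultiplicity a) with h0 | h0
      · rw [h0] at e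
        have := Nat.mul_pos (Nat.pos_of_ne_zero hn) hpos
        omega
      · exact h0
    have d1 : m ∣ p.rootMultiplicity a := hmn.dvd_of_dvd_mul_left ⟨_, e⟩
    have d2 : n ∣ q.rootMultiplicity a := hmn.symm.dvd_of_dvd_mul_left ⟨_, e.symm⟩
    obtain ⟨c₁, h1, h1'⟩ := eq_of_mult m p hp hpd a (Nat.le_of_dvd hpos d1)
    obtain ⟨c₂, h2, h2'⟩ := eq_of_mult n q hq hqd a (Nat.le_of_dvd hqpos d2)
    exact ⟨_, c₁, c₂, by simp, h1, h2, h1', h2'⟩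
  · push Not at hr
    have hr' : ∀ a, ¬ q.IsRoot a := by
      intro a ha
      have hpos := (Polynomial.rootMultiplicity_pos hq).2 ha
      have e := hmul a
      rw [Polynomial.rootMultiplicity_eq_zero (hr a)] at e
      have := Nat.mul_pos (Nat.pos_of_ne_zero hm) hpos
      omega
    obtain ⟨c₁, h1, h1'⟩ := const_of_no_root p hp hr
    obtain ⟨c₂, h2, h2'⟩ := const_of_no_root q hq hr'
    exact ⟨1, c₁, c₂, by simp, h1, h2, by simpa using h1', by simpa using h2'⟩

lemma natDegree_le {K : Type*} [Field K] {m : ℕ} {f : MvPolynomial (Fin 2) K}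
    (hf : f.IsHomogeneous m) :
    (aeval ![(Polynomial.X : Polynomial K), 1] f).natDegree ≤ m := by
  have := MvPolynomial.aeval_natDegree_le (m := m) (n := 1) f hf.totalDegree_le
    ![(Polynomial.X : Polynomial K), 1] (by intro i; fin_cases i <;> simp)
  simpa using this

lemma lift {K : Type*} [Field K] {m : ℕ} {f : MvPolynomial (Fin 2) K}
    (hf : f.IsHomogeneous m) (l : Polynomial K) (c : K) (hl : l.natDegree ≤ 1)
    (h : aeval ![(Polynomial.X : Polynomial K), 1] f = Polynomial.C c * l ^ m) :
    f = c • (l.homogenize 1) ^ m := by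
  rw [← Polynomial.homogenize_eq_of_isHomogeneous hf h]
  apply Polynomial.homogenize_eq_of_isHomogeneous
  · rw [MvPolynomial.smul_eq_C_mul]
    have := (isHomogeneous_C (Fin 2) c).mul
      ((Polynomial.isHomogeneous_homogenize (n := 1) l).pow m)
    simpa using this
  · rw [map_smul, map_pow, Polynomial.aeval_homogenize_X_one l hl, Polynomial.smul_eq_C_mul]

lemma const_case {K : Type*} [Field K] {f : MvPolynomial (Fin 2) K} (hf : f.IsHomogeneous 0)
    (hf0 : f ≠ 0) : ∃ c : K, c ≠ 0 ∧ f = C c := by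
  have := totalDegree_eq_zero_iff_eq_C.1 (Nat.le_zero.1 hf.totalDegree_le)
  refine ⟨_, fun h0 => hf0 ?_, this⟩
  rw [this, h0, C_0]

end TransvAux

/-- Over an algebraically closed field of characteristic zero, if `f`, `g` are
nonzero binary forms of coprime degrees `m` and `n` with `{f,g} = 0`, then there
is a linear form `ℓ` with `f = c₁ • ℓ^m` and `g = c₂ • ℓ^n` for nonzero scalars
`c₁`, `c₂`. -/
theorem transvectant_eq_zero_coprime_degrees {K : Type*} [Field K] [IsAlgClosed K]
    [CharZero K] (m n : ℕ) (hmn : Nat.Coprime m n)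
    (f g : MvPolynomial (Fin 2) K)
    (hf : f.IsHomogeneous m) (hg : g.IsHomogeneous n)
    (hf0 : f ≠ 0) (hg0 : g ≠ 0) (h : transvectant f g = 0) :
    ∃ (ℓ : MvPolynomial (Fin 2) K) (c₁ c₂ : K),
      ℓ.IsHomogeneous 1 ∧ c₁ ≠ 0 ∧ c₂ ≠ 0 ∧
      f = c₁ • ℓ ^ m ∧ g = c₂ • ℓ ^ n := by
  rcases Nat.eq_zero_or_pos m with rfl | hm
  · obtain rfl : n = 1 := by simpa using hmn
    obtain ⟨c, hc, rfl⟩ := TransvAux.const_case hf hf0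
    exact ⟨g, c, 1, hg, hc, one_ne_zero, by simp [MvPolynomial.smul_eq_C_mul], by simp⟩
  rcases Nat.eq_zero_or_pos n with rfl | hn
  · obtain rfl : m = 1 := by simpa using hmn
    obtain ⟨c, hc, rfl⟩ := TransvAux.const_case hg hg0
    exact ⟨f, 1, c, hf, one_ne_zero, hc, by simp, by simp [MvPolynomial.smul_eq_C_mul]⟩
  have ef := hf.sum_X_mul_pderiv
  have eg := hg.sum_X_mul_pderiv
  rw [Fin.sum_univ_two, nsmul_eq_mul] at ef eg
  unfold transvectant at h
  have e : (n : MvPolynomial (Fin 2) K) * g * pderiv 0 f = m * f * pderiv 0 g := by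
    linear_combination (pderiv 0 g) * ef - (pderiv 0 f) * eg + X 1 * h
  have e' := congrArg (aeval ![(Polynomial.X : Polynomial K), 1]) e
  simp only [map_mul, map_natCast, ← TransvAux.deriv_aeval] at e'
  have ne : ∀ {d : ℕ} {f : MvPolynomial (Fin 2) K}, f.IsHomogeneous d → f ≠ 0 →
      aeval ![(Polynomial.X : Polynomial K), 1] f ≠ 0 := by
    intro d f hf hf0 h0
    apply hf0
    rw [← Polynomial.homogenize_eq_of_isHomogeneous hf h0, Polynomial.homogenize_zero]
  obtain ⟨l, c₁, c₂, hl, h1, h2, h3, h4⟩ := TransvAux.uni m n hmn hm.ne' hn.ne' _ _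
    (ne hf hf0) (ne hg hg0) (TransvAux.natDegree_le hf) (TransvAux.natDegree_le hg) e'
  exact ⟨l.homogenize 1, c₁, c₂, Polynomial.isHomogeneous_homogenize l, h1, h2,
    TransvAux.lift hf l c₁ hl h3, TransvAux.lift hg l c₂ hl h4⟩
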